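/- Lemma 6: Suppose the BMI feasible set F is nonempty and x̌ ∈ ℝⁿ satisfies s(x̌) > 2‖p‖₂ d_F(x̌), and let ε > 0. Then there exists η₀ > 0 such that for all η ≥ η₀ and every optimal solution x* of the penalized problem (P_η), there exists an m×m real symmetric positive semidefinite matrix Λ* such that (x*, Λ*) satisfies the KKT conditions for (P_η) and tr(Λ*)/η ≤ 2 d_F(x̌)/(s(x̌) − 2‖p‖₂ d_F(x̌)) + ε. -/

import Mathlib

/-!
Comparing objective values with those of feasible points, an optimal solution `x*` of `(P_η)` lies
within `d_F(x̌) + ‖c‖/η` of `x̌`.  The function `s` is Lipschitz with constant `2‖p‖₂`, because for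
unit `u` and `b` the form `uᵀ p'(x)b u` depends on `x` through `2 bᵀ M(u) x`.  Hence, for large `η`,
`s(x*)` is at least about `s(x̌) - 2‖p‖₂ d_F(x̌) > 0`, which yields MFCQ at `x*`.

By optimality no direction `h` decreases the objective to first order while moving the linearized
constraint `p + p'(x*)h` into the open cone of negative definite matrices.  Separating that cone,
paired with the negative half-line, from the affine image of all directions gives Fritz John
multipliers, and MFCQ makes the objective multiplier positive.

Pairing the stationarity equation with a unit vector `b` bounds `λ_min(-p'(x*)b) tr Λ` by
`‖c + 2η(x* - x̌)‖`.  Taking the supremum over `b` replaces the eigenvalue by `s(x*)`, and dividing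
by `η` leaves an error that vanishes as `η → ∞`.
-/

open Matrix

noncomputable section

/-- Euclidean (ℓ₂) norm of a finite real vector. -/
def vecNorm {k : ℕ} (u : Fin k → ℝ) : ℝ := Real.sqrt (∑ i, u i ^ 2)

/-- The matrix pencil `p(x, X) = F₀ + ∑ₖ xₖ Kₖ + ∑ᵢ ∑ⱼ Xᵢⱼ Lᵢⱼ`. -/
def pencil {n m : ℕ} (F0 : Matrix (Fin m) (Fin m) ℝ)
    (K : Fin n → Matrix (Fin m) (Fin m) ℝ)
    (L : Fin n → Fin n → Matrix (Fin m) (Fin m) ℝ)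
    (x : Fin n → ℝ) (X : Matrix (Fin n) (Fin n) ℝ) : Matrix (Fin m) (Fin m) ℝ :=
  F0 + ∑ k, x k • K k + ∑ i, ∑ j, X i j • L i j

/-- Negative semidefinite real matrix. -/
def NegSemidef' {k : ℕ} (A : Matrix (Fin k) (Fin k) ℝ) : Prop := (-A).PosSemidef

/-- Negative definite real matrix. -/
def NegDef' {k : ℕ} (A : Matrix (Fin k) (Fin k) ℝ) : Prop := (-A).PosDef

/-- The BMI feasible set `F = {x : p(x, xxᵀ) ⪯ 0}`. -/
def feasSet {n m : ℕ} (F0 : Matrix (Fin m) (Fin m) ℝ)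
    (K : Fin n → Matrix (Fin m) (Fin m) ℝ)
    (L : Fin n → Fin n → Matrix (Fin m) (Fin m) ℝ) : Set (Fin n → ℝ) :=
  {x | NegSemidef' (pencil F0 K L x (vecMulVec x x))}

/-- Feasibility distance `d_F(x) = inf {‖x − a‖₂ : a ∈ F}`. -/
def distF {n m : ℕ} (F0 : Matrix (Fin m) (Fin m) ℝ)
    (K : Fin n → Matrix (Fin m) (Fin m) ℝ)
    (L : Fin n → Fin n → Matrix (Fin m) (Fin m) ℝ) (x : Fin n → ℝ) : ℝ :=
  sInf {r | ∃ a ∈ feasSet F0 K L, r = vecNorm (x - a)}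

/-- `δₖ(x) = 2 ∑ᵢ xᵢ L_{k i}`. -/
def deltaMat {n m : ℕ} (L : Fin n → Fin n → Matrix (Fin m) (Fin m) ℝ)
    (k : Fin n) (x : Fin n → ℝ) : Matrix (Fin m) (Fin m) ℝ :=
  (2 : ℝ) • ∑ i, x i • L k i

/-- The MFCQ condition at a point `x`. -/
def MFCQ {n m : ℕ} (F0 : Matrix (Fin m) (Fin m) ℝ)
    (K : Fin n → Matrix (Fin m) (Fin m) ℝ)
    (L : Fin n → Fin n → Matrix (Fin m) (Fin m) ℝ) (x : Fin n → ℝ) : Prop :=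
  ∃ b : Fin n → ℝ,
    NegDef' (pencil F0 K L x (vecMulVec x x) + ∑ k, b k • (K k + deltaMat L k x))

/-- Smallest eigenvalue of a symmetric real matrix, via the Rayleigh quotient. -/
def lambdaMin {k : ℕ} (A : Matrix (Fin k) (Fin k) ℝ) : ℝ :=
  sInf {r | ∃ u : Fin k → ℝ, vecNorm u = 1 ∧ r = u ⬝ᵥ (A *ᵥ u)}

/-- The G-MFCQ function `s(x)`. -/
def sFun {n m : ℕ} (K : Fin n → Matrix (Fin m) (Fin m) ℝ)
    (L : Fin n → Fin n → Matrix (Fin m) (Fin m) ℝ) (x : Fin n → ℝ) : ℝ :=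
  sSup {r | ∃ b : Fin n → ℝ, vecNorm b = 1 ∧
    r = lambdaMin (-(∑ k, b k • (K k + deltaMat L k x)))}

/-- Spectral norm of a real matrix. -/
def specNorm {k : ℕ} (A : Matrix (Fin k) (Fin k) ℝ) : ℝ :=
  sSup {r | ∃ v : Fin k → ℝ, vecNorm v = 1 ∧ r = vecNorm (A *ᵥ v)}

/-- Pencil norm `‖p‖₂`. -/
def pencilNorm {n m : ℕ} (L : Fin n → Fin n → Matrix (Fin m) (Fin m) ℝ) : ℝ :=
  sSup {r | ∃ u : Fin m → ℝ, vecNorm u = 1 ∧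
    r = specNorm (Matrix.of fun i j => u ⬝ᵥ (L i j *ᵥ u))}

/-- Cone `C₁`: positive semidefinite matrices. -/
def coneC1 (n : ℕ) : Set (Matrix (Fin n) (Fin n) ℝ) := {H | H.PosSemidef}

/-- Cone `C₂`: symmetric matrices with `Hᵢᵢ ≥ 0` and `Hᵢᵢ Hⱼⱼ ≥ Hᵢⱼ²`. -/
def coneC2 (n : ℕ) : Set (Matrix (Fin n) (Fin n) ℝ) :=
  {H | H.IsSymm ∧ ∀ i j, 0 ≤ H i i ∧ H i j ^ 2 ≤ H i i * H j j}

/-- Cone `C₃`: symmetric matrices with `Hᵢᵢ ≥ 0` and `Hᵢᵢ + Hⱼⱼ ≥ 2|Hᵢⱼ|`. -/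
def coneC3 (n : ℕ) : Set (Matrix (Fin n) (Fin n) ℝ) :=
  {H | H.IsSymm ∧ ∀ i j, 0 ≤ H i i ∧ 2 * |H i j| ≤ H i i + H j j}

/-- Dual cone with respect to the trace inner product. -/
def dualCone {n : ℕ} (C : Set (Matrix (Fin n) (Fin n) ℝ)) :
    Set (Matrix (Fin n) (Fin n) ℝ) :=
  {Y | Y.IsSymm ∧ ∀ H ∈ C, 0 ≤ (Y * H).trace}

/-- `α(Λ)` : the n×n matrix with entries `⟨Lᵢⱼ, Λ⟩ = tr(Lᵢⱼ Λ)`. -/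
def alphaMat {n m : ℕ} (L : Fin n → Fin n → Matrix (Fin m) (Fin m) ℝ)
    (Λ : Matrix (Fin m) (Fin m) ℝ) : Matrix (Fin n) (Fin n) ℝ :=
  Matrix.of fun i j => (L i j * Λ).trace

/-- Objective of the penalized problem `(P_η)`. -/
def penObj {n : ℕ} (c xc : Fin n → ℝ) (η : ℝ) (x : Fin n → ℝ) : ℝ :=
  c ⬝ᵥ x + η * vecNorm (x - xc) ^ 2

/-- `x` is an optimal solution of the penalized problem `(P_η)`. -/
def IsOptPen {n m : ℕ} (F0 : Matrix (Fin m) (Fin m) ℝ)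
    (K : Fin n → Matrix (Fin m) (Fin m) ℝ)
    (L : Fin n → Fin n → Matrix (Fin m) (Fin m) ℝ)
    (c xc : Fin n → ℝ) (η : ℝ) (x : Fin n → ℝ) : Prop :=
  x ∈ feasSet F0 K L ∧ ∀ y ∈ feasSet F0 K L, penObj c xc η x ≤ penObj c xc η y

/-- Objective of the penalized convex relaxation `(R_{η,C})`. -/
def relObj {n : ℕ} (c xc : Fin n → ℝ) (η : ℝ) (x : Fin n → ℝ)
    (X : Matrix (Fin n) (Fin n) ℝ) : ℝ :=
  c ⬝ᵥ x + η * (X.trace - 2 * (xc ⬝ᵥ x) + xc ⬝ᵥ xc)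

/-- Feasibility for the relaxation with cone `C`. -/
def RelFeasible {n m : ℕ} (F0 : Matrix (Fin m) (Fin m) ℝ)
    (K : Fin n → Matrix (Fin m) (Fin m) ℝ)
    (L : Fin n → Fin n → Matrix (Fin m) (Fin m) ℝ)
    (C : Set (Matrix (Fin n) (Fin n) ℝ))
    (x : Fin n → ℝ) (X : Matrix (Fin n) (Fin n) ℝ) : Prop :=
  X.IsSymm ∧ NegSemidef' (pencil F0 K L x X) ∧ X - vecMulVec x x ∈ C

/-- `(x, X)` is an optimal solution of the penalized convex relaxation `(R_{η,C})`. -/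
def IsOptRel {n m : ℕ} (F0 : Matrix (Fin m) (Fin m) ℝ)
    (K : Fin n → Matrix (Fin m) (Fin m) ℝ)
    (L : Fin n → Fin n → Matrix (Fin m) (Fin m) ℝ)
    (c xc : Fin n → ℝ) (η : ℝ) (C : Set (Matrix (Fin n) (Fin n) ℝ))
    (x : Fin n → ℝ) (X : Matrix (Fin n) (Fin n) ℝ) : Prop :=
  RelFeasible F0 K L C x X ∧
    ∀ y Y, RelFeasible F0 K L C y Y → relObj c xc η x X ≤ relObj c xc η y Y

/-- The KKT conditions for `(P_η)` at `(x, Λ)`. -/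
def KKT {n m : ℕ} (F0 : Matrix (Fin m) (Fin m) ℝ)
    (K : Fin n → Matrix (Fin m) (Fin m) ℝ)
    (L : Fin n → Fin n → Matrix (Fin m) (Fin m) ℝ)
    (c xc : Fin n → ℝ) (η : ℝ)
    (x : Fin n → ℝ) (Λ : Matrix (Fin m) (Fin m) ℝ) : Prop :=
  Λ.IsSymm ∧ Λ.PosSemidef ∧
  c + (2 * η) • (x - xc) + (∑ k, ((K k * Λ).trace) • (Pi.single k 1 : Fin n → ℝ))
      + (2 : ℝ) • (alphaMat L Λ *ᵥ x) = 0 ∧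
  Λ * pencil F0 K L x (vecMulVec x x) = 0

section Matrix

variable {ι : Type*}

lemma isSymm_sum {κ R : Type*} [AddCommMonoid R] {s : Finset κ}
    {A : κ → Matrix ι ι R} (hA : ∀ i, (A i).IsSymm) : (∑ i ∈ s, A i).IsSymm := by
  rw [IsSymm, transpose_sum]
  exact Finset.sum_congr rfl fun i _ => hA i

variable [Fintype ι]

lemma dotProduct_smul_mulVec_smul {R : Type*} [CommSemiring R] (A : Matrix ι ι R)
    (t : R) (u : ι → R) :
    (t • u) ⬝ᵥ (A *ᵥ (t • u)) = t ^ 2 * (u ⬝ᵥ (A *ᵥ u)) := by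
  simp only [mulVec_smul, smul_dotProduct, dotProduct_smul, smul_eq_mul]
  ring

lemma posSemidef_of_isSymm {A : Matrix ι ι ℝ} (hA : A.IsSymm)
    (h : ∀ u, 0 ≤ u ⬝ᵥ (A *ᵥ u)) : A.PosSemidef :=
  .of_dotProduct_mulVec_nonneg (by rwa [IsHermitian, conjTranspose_eq_transpose_of_trivial])
    (by simpa only [star_trivial] using h)

lemma exists_eq_trace_mul {R : Type*} [CommSemiring R] (φ : Matrix ι ι R →ₗ[R] R) :
    ∃ W : Matrix ι ι R, ∀ Z, φ Z = (W * Z).trace := by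
  classical
  refine ⟨of fun i j => φ (single j i 1), fun Z => ?_⟩
  suffices φ = traceLinearMap ι R R ∘ₗ LinearMap.mulLeft R (of fun i j => φ (single j i 1)) from
    congr($this Z)
  refine ext_linearMap _ fun i j => LinearMap.ext_ring ?_
  simp [trace_mul_single]

variable {𝕜 : Type*} [RCLike 𝕜]

lemma trace_gram_mul_gram (P Q : Matrix ι ι 𝕜) :
    (Pᴴ * P * (Qᴴ * Q)).trace = ((P * Qᴴ)ᴴ * (P * Qᴴ)).trace := by
  rw [← Matrix.mul_assoc, trace_mul_comm, conjTranspose_mul, conjTranspose_conjTranspose]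
  simp only [Matrix.mul_assoc]

variable {A B : Matrix ι ι 𝕜}

open scoped MatrixOrder ComplexOrder

lemma exists_eq_gram_of_posSemidef (hA : A.PosSemidef) : ∃ P : Matrix ι ι 𝕜, A = Pᴴ * P := by
  classical
  exact CStarAlgebra.nonneg_iff_eq_star_mul_self.1 hA.nonneg

lemma trace_mul_nonneg_of_posSemidef (hA : A.PosSemidef) (hB : B.PosSemidef) :
    0 ≤ (A * B).trace := by
  obtain ⟨P, rfl⟩ := exists_eq_gram_of_posSemidef hA
  obtain ⟨Q, rfl⟩ := exists_eq_gram_of_posSemidef hB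
  rw [trace_gram_mul_gram]
  exact (posSemidef_conjTranspose_mul_self _).trace_nonneg

lemma mul_eq_zero_of_trace_mul_eq_zero (hA : A.PosSemidef) (hB : B.PosSemidef)
    (h : (A * B).trace = 0) : A * B = 0 := by
  obtain ⟨P, rfl⟩ := exists_eq_gram_of_posSemidef hA
  obtain ⟨Q, rfl⟩ := exists_eq_gram_of_posSemidef hB
  rw [trace_gram_mul_gram, trace_conjTranspose_mul_self_eq_zero_iff] at h
  rw [Matrix.mul_assoc, ← Matrix.mul_assoc P, h, Matrix.zero_mul, Matrix.mul_zero]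

end Matrix

section ConeConstrained

open Filter Topology

lemma nonpos_and_nonneg_of_forall_pos_mul_le {a u : ℝ} (h : ∀ t > 0, t * a ≤ u) :
    a ≤ 0 ∧ 0 ≤ u := by
  have h_zero : Tendsto (fun t : ℝ => t * a) (𝓝[>] 0) (𝓝 0) := by
    simpa using ((continuous_mul_const a).tendsto 0).mono_left nhdsWithin_le_nhds
  refine ⟨?_, le_of_tendsto h_zero (eventually_nhdsWithin_of_forall h)⟩
  by_contra! ha
  obtain ⟨t, hut, ht⟩ := (((tendsto_id.atTop_mul_const ha).eventually_gt_atTop u).and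
    (eventually_gt_atTop (0 : ℝ))).exists
  exact (h t ht).not_gt hut

variable {V E : Type*} [AddCommGroup V] [Module ℝ V]

lemma linearMap_apply_eq_zero_of_forall_le {φ : V →ₗ[ℝ] ℝ} {a : ℝ} (h : ∀ v, a ≤ φ v) (v : V) :
    φ v = 0 := by
  by_contra hv
  have := h (((a - 1) / φ v) • v)
  rw [map_smul, smul_eq_mul, div_mul_cancel₀ _ hv] at this
  linarith

section FritzJohn

variable [AddCommGroup E] [Module ℝ E] [TopologicalSpace E] [IsTopologicalAddGroup E]
  [ContinuousSMul ℝ E] {N : ConvexCone ℝ E}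

lemma exists_separation_of_no_descent (hN : IsOpen (N : Set E)) {G : E} (g : V →ₗ[ℝ] ℝ)
    (D : V →ₗ[ℝ] E) (h_no_descent : ∀ h, g h < 0 → G + D h ∉ N) :
    ∃ (l : ℝ) (ψ : E →L[ℝ] ℝ) (u : ℝ), (∀ r < 0, ∀ Z ∈ N, r * l + ψ Z < u) ∧
      ∀ h, u ≤ ψ G + (l * g h + ψ (D h)) := by
  have h_disj : Disjoint (Set.Iio (0 : ℝ) ×ˢ (N : Set E))
      (Set.range fun h => (g h, G + D h)) := by
    rw [Set.disjoint_right]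
    rintro _ ⟨h, rfl⟩ ⟨hg, hD⟩
    exact h_no_descent h hg hD
  have h_convex : Convex ℝ (Set.range fun h => (g h, G + D h)) := by
    have : (Set.range fun h => (g h, G + D h)) =
        (fun z => ((0 : ℝ), G) + z) '' (g.prod D '' Set.univ) := by
      simp [← Set.range_comp, Function.comp_def]
    rw [this]
    exact (convex_univ.linear_image _).translate _
  obtain ⟨f, u, hf_lt, hf_ge⟩ := geometric_hahn_banach_open
    ((convex_Iio 0).prod N.convex) (isOpen_Iio.prod hN) h_convex h_disj
  have hf (r : ℝ) (Z : E) : f (r, Z) = r * f (1, 0) + f.comp (.inr ℝ ℝ E) Z := by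
    rw [← smul_eq_mul, ← map_smul, ContinuousLinearMap.comp_apply, ← map_add]
    simp
  refine ⟨f (1, 0), f.comp (.inr ℝ ℝ E), u, fun r hr Z hZ => ?_, fun h => ?_⟩
  · rw [← hf]
    exact hf_lt _ ⟨hr, hZ⟩
  · rw [add_left_comm, ← map_add, mul_comm, ← hf]
    exact hf_ge _ ⟨h, rfl⟩

lemma exists_fritzJohn_multiplier (hN : IsOpen (N : Set E)) {G : E}
    (hG : G ∈ closure (N : Set E)) (g : V →ₗ[ℝ] ℝ) (D : V →ₗ[ℝ] E)
    (h_no_descent : ∀ h, g h < 0 → G + D h ∉ N) :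
    ∃ l ≥ 0, ∃ ψ : E →L[ℝ] ℝ, (l ≠ 0 ∨ ψ ≠ 0) ∧ (∀ Z ∈ N, ψ Z ≤ 0) ∧
      (∀ h, l * g h + ψ (D h) = 0) ∧ ψ G = 0 := by
  obtain ⟨l, ψ, u, h_lt, h_ge⟩ := exists_separation_of_no_descent hN g D h_no_descent
  obtain ⟨Z₀, hZ₀⟩ : (N : Set E).Nonempty := closure_nonempty_iff.1 ⟨G, hG⟩
  have h_scale {Z : E} (hZ : Z ∈ N) : -l ≤ 0 ∧ 0 ≤ u - ψ Z :=
    nonpos_and_nonneg_of_forall_pos_mul_le fun t ht => by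
      linarith [h_lt (-t) (neg_lt_zero.2 ht) Z hZ]
  have h_cone {Z : E} (hZ : Z ∈ N) : ψ Z ≤ 0 ∧ 0 ≤ u :=
    nonpos_and_nonneg_of_forall_pos_mul_le fun t ht => by
      simpa using (h_scale (N.smul_mem ht hZ)).2
  have hu : 0 ≤ u := (h_cone hZ₀).2
  have hψG : ψ G ≤ 0 := closure_minimal (fun Z hZ => (h_cone hZ).1)
    (isClosed_le ψ.continuous continuous_const) hG
  have h_ge_zero : u ≤ ψ G := by simpa using h_ge 0
  refine ⟨l, neg_nonpos.1 (h_scale hZ₀).1, ψ, ?_, fun Z hZ => (h_cone hZ).1, fun h => ?_,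
    hψG.antisymm (hu.trans h_ge_zero)⟩
  · by_contra! h0
    have h_pos := h_lt (-1) (by simp) Z₀ hZ₀
    rw [h0.1, h0.2, mul_zero, zero_add] at h_pos
    exact h_pos.not_ge (by simpa [h0.2] using h_ge_zero)
  · exact linearMap_apply_eq_zero_of_forall_le (φ := l • g + ψ.toLinearMap ∘ₗ D)
      (fun h => sub_le_iff_le_add'.2 (h_ge h)) h

end FritzJohn

section Normed

variable [NormedAddCommGroup E] [NormedSpace ℝ E] {N : ConvexCone ℝ E}

lemma exists_multiplier_of_no_descent (hN : IsOpen (N : Set E)) {G : E}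
    (hG : G ∈ closure (N : Set E)) (g : V →ₗ[ℝ] ℝ) (D : V →ₗ[ℝ] E)
    (h_no_descent : ∀ h, g h < 0 → G + D h ∉ N) (h_slater : ∃ b, G + D b ∈ N) :
    ∃ ψ : E →L[ℝ] ℝ, (∀ Z ∈ N, ψ Z ≤ 0) ∧ (∀ h, g h + ψ (D h) = 0) ∧ ψ G = 0 := by
  obtain ⟨b, hb⟩ := h_slater
  obtain ⟨l, hl, ψ, h_ne, hψN, h_stat, hψG⟩ :=
    exists_fritzJohn_multiplier hN hG g D h_no_descent
  have hl0 : l ≠ 0 := by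
    -- If `l = 0`, the functional `ψ` vanishes at `G + D b`, an interior maximum on `N`.
    rintro rfl
    have h_max : IsLocalMax ψ (G + D b) := by
      filter_upwards [hN.mem_nhds hb] with Z hZ
      simpa [hψG, show ψ (D b) = 0 by simpa using h_stat b] using hψN Z hZ
    exact h_ne.elim (· rfl) (· (h_max.hasFDerivAt_eq_zero ψ.hasFDerivAt))
  refine ⟨l⁻¹ • ψ, fun Z hZ => ?_, fun h => ?_, by simp [hψG]⟩
  · exact mul_nonpos_of_nonneg_of_nonpos (inv_nonneg.2 hl) (hψN Z hZ)
  · rw [_root_.smul_apply, smul_eq_mul, eq_neg_of_add_eq_zero_right (h_stat h),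
      mul_neg, inv_mul_cancel_left₀ hl0, add_neg_cancel]

lemma hasDerivAt_quadratic (a b d : E) :
    HasDerivAt (fun t : ℝ => a + t • b + t ^ 2 • d) b 0 := by
  have h_lin := ((hasDerivAt_id (0 : ℝ)).smul_const b).const_add a
  have h_sq := ((hasDerivAt_id (0 : ℝ)).pow 2).smul_const d
  simpa using (h_lin.fun_add h_sq)

lemma eventually_mem_of_hasDerivAt (hN : IsOpen (N : Set E)) {γ : ℝ → E} {γ' : E}
    (hγ : HasDerivAt γ γ' 0) (h0 : γ 0 ∈ closure (N : Set E)) (h1 : γ 0 + γ' ∈ N) :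
    ∀ᶠ t in 𝓝[>] 0, γ t ∈ N := by
  have h_slope : Tendsto (fun t => γ 0 + t⁻¹ • (γ t - γ 0)) (𝓝[>] 0) (𝓝 (γ 0 + γ')) := by
    simpa using hγ.tendsto_slope_zero_right.const_add (γ 0)
  filter_upwards [h_slope.eventually (hN.mem_nhds h1), Ioo_mem_nhdsGT one_pos] with t hmem ht
  -- `γ t` lies between `γ 0 ∈ closure N` and a point which is in the open cone for small `t`.
  have h_combo := N.convex.combo_closure_interior_mem_interior h0
    (hN.interior_eq.symm ▸ hmem) (sub_nonneg.2 ht.2.le) ht.1 (sub_add_cancel 1 t)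
  rw [hN.interior_eq] at h_combo
  rw [smul_add, smul_inv_smul₀ ht.1.ne'] at h_combo
  convert SetLike.mem_coe.1 h_combo using 1
  module

lemma exists_multiplier_of_isMinOn (hN : IsOpen (N : Set E)) {f : V → ℝ} {P : V → E} {x : V}
    (hx : P x ∈ closure (N : Set E)) (h_min : IsMinOn f {y | P y ∈ closure (N : Set E)} x)
    (g : V →ₗ[ℝ] ℝ) (hg : ∀ h, HasLineDerivAt ℝ f (g h) x h)
    (D : V →ₗ[ℝ] E) (hD : ∀ h, HasLineDerivAt ℝ P (D h) x h) (h_mfcq : ∃ b, P x + D b ∈ N) :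
    ∃ ψ : E →L[ℝ] ℝ, (∀ Z ∈ N, ψ Z ≤ 0) ∧ (∀ h, g h + ψ (D h) = 0) ∧ ψ (P x) = 0 := by
  refine exists_multiplier_of_no_descent hN hx g D (fun h hgh hDh => ?_) h_mfcq
  have h_feas : ∀ᶠ t : ℝ in 𝓝[>] 0, P (x + t • h) ∈ N :=
    eventually_mem_of_hasDerivAt hN (hD h) (by simpa using hx) (by simpa using hDh)
  have h_decr : ∀ᶠ t : ℝ in 𝓝[>] 0, t⁻¹ • (f (x + t • h) - f x) < 0 :=
    (hg h).tendsto_slope_zero_right.eventually_lt_const hgh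
  obtain ⟨t, ht, h_mem, h_lt⟩ :=
    (eventually_mem_nhdsWithin.and (h_feas.and h_decr)).exists
  have h_nonneg : 0 ≤ f (x + t • h) - f x := sub_nonneg.2 (h_min (subset_closure h_mem))
  exact h_lt.not_ge (mul_nonneg (inv_nonneg.2 (Set.mem_Ioi.1 ht).le) h_nonneg)

end Normed

end ConeConstrained

section VecNorm

variable {k : ℕ}

lemma vecNorm_eq_norm_toLp (u : Fin k → ℝ) : vecNorm u = ‖WithLp.toLp 2 u‖ := by
  simp [vecNorm, EuclideanSpace.norm_eq]

lemma vecNorm_nonneg (u : Fin k → ℝ) : 0 ≤ vecNorm u := Real.sqrt_nonneg _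

lemma vecNorm_smul (t : ℝ) (u : Fin k → ℝ) : vecNorm (t • u) = |t| * vecNorm u := by
  simp only [vecNorm_eq_norm_toLp, WithLp.toLp_smul, norm_smul, Real.norm_eq_abs]

lemma vecNorm_add_le (u v : Fin k → ℝ) : vecNorm (u + v) ≤ vecNorm u + vecNorm v := by
  simpa only [vecNorm_eq_norm_toLp, WithLp.toLp_add] using norm_add_le _ _

lemma vecNorm_sub_comm (u v : Fin k → ℝ) : vecNorm (u - v) = vecNorm (v - u) := by
  simpa only [vecNorm_eq_norm_toLp, WithLp.toLp_sub] using norm_sub_rev _ _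

lemma vecNorm_sub_le (u v w : Fin k → ℝ) :
    vecNorm (u - w) ≤ vecNorm (u - v) + vecNorm (v - w) := by
  simpa only [vecNorm_eq_norm_toLp, WithLp.toLp_sub] using norm_sub_le_norm_sub_add_norm_sub _ _ _

lemma vecNorm_sq (u : Fin k → ℝ) : vecNorm u ^ 2 = u ⬝ᵥ u := by
  rw [vecNorm, Real.sq_sqrt (Finset.sum_nonneg fun i _ => sq_nonneg (u i))]
  simp only [dotProduct, sq]

lemma dotProduct_le_vecNorm_mul_vecNorm (u v : Fin k → ℝ) :
    u ⬝ᵥ v ≤ vecNorm u * vecNorm v := by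
  simpa only [vecNorm_eq_norm_toLp, EuclideanSpace.inner_toLp_toLp, star_trivial, mul_comm] using
    real_inner_le_norm (WithLp.toLp 2 v) (WithLp.toLp 2 u)

lemma exists_vecNorm_eq_one [NeZero k] : ∃ u : Fin k → ℝ, vecNorm u = 1 :=
  ⟨Pi.single 0 1, by simp [vecNorm_eq_norm_toLp]⟩

lemma ne_zero_of_vecNorm_eq_one {u : Fin k → ℝ} (hu : vecNorm u = 1) : u ≠ 0 := by
  rintro rfl
  simp [vecNorm_eq_norm_toLp] at hu

lemma vecNorm_pos {u : Fin k → ℝ} (hu : u ≠ 0) : 0 < vecNorm u := by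
  rw [vecNorm_eq_norm_toLp, norm_pos_iff]
  simpa using hu

lemma exists_eq_vecNorm_smul {u : Fin k → ℝ} (hu : u ≠ 0) :
    ∃ v, vecNorm v = 1 ∧ u = vecNorm u • v := by
  have h_pos := vecNorm_pos hu
  refine ⟨(vecNorm u)⁻¹ • u, ?_, (smul_inv_smul₀ h_pos.ne' u).symm⟩
  rw [vecNorm_smul, abs_of_pos (inv_pos.2 h_pos), inv_mul_cancel₀ h_pos.ne']

lemma isCompact_vecNorm_eq_one : IsCompact {u : Fin k → ℝ | vecNorm u = 1} := by
  convert (isCompact_sphere (0 : EuclideanSpace ℝ (Fin k)) 1).image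
    (PiLp.continuous_ofLp 2 fun _ => ℝ)
  ext u
  simp only [vecNorm_eq_norm_toLp, Set.mem_ofPred_eq, Set.mem_image, mem_sphere_zero_iff_norm]
  exact ⟨fun hu => ⟨_, hu, rfl⟩, by rintro ⟨v, hv, rfl⟩; exact hv⟩

end VecNorm

section LambdaMin

variable {k : ℕ} {A : Matrix (Fin k) (Fin k) ℝ}

lemma lambdaMin_le {u : Fin k → ℝ} (hu : vecNorm u = 1) : lambdaMin A ≤ u ⬝ᵥ (A *ᵥ u) := by
  refine csInf_le ?_ ⟨u, hu, rfl⟩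
  convert isCompact_vecNorm_eq_one.bddBelow_image
    (f := fun u : Fin k → ℝ => u ⬝ᵥ (A *ᵥ u)) (by fun_prop) using 1
  ext r
  simp only [Set.mem_ofPred_eq, Set.mem_image, eq_comm]

lemma lambdaMin_mul_le (u : Fin k → ℝ) : lambdaMin A * (u ⬝ᵥ u) ≤ u ⬝ᵥ (A *ᵥ u) := by
  rcases eq_or_ne u 0 with rfl | hu
  · simp
  · obtain ⟨v, hv, huv⟩ := exists_eq_vecNorm_smul hu
    rw [huv, dotProduct_smul_mulVec_smul, ← vecNorm_sq (_ • _), ← huv, mul_comm]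
    exact mul_le_mul_of_nonneg_left (lambdaMin_le hv) (sq_nonneg _)

lemma le_lambdaMin [NeZero k] {r : ℝ} (h : ∀ u, vecNorm u = 1 → r ≤ u ⬝ᵥ (A *ᵥ u)) :
    r ≤ lambdaMin A := by
  obtain ⟨u, hu⟩ := exists_vecNorm_eq_one (k := k)
  refine le_csInf ⟨_, u, hu, rfl⟩ ?_
  rintro _ ⟨v, hv, rfl⟩
  exact h v hv

lemma posSemidef_sub_lambdaMin_smul_one (hA : A.IsSymm) :
    (A - lambdaMin A • (1 : Matrix (Fin k) (Fin k) ℝ)).PosSemidef := by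
  refine posSemidef_of_isSymm (hA.sub (isSymm_one.smul _)) fun u => ?_
  simpa only [sub_mulVec, smul_mulVec, one_mulVec, dotProduct_sub, dotProduct_smul, smul_eq_mul,
    sub_nonneg] using lambdaMin_mul_le u

end LambdaMin

section NegDefCone

open Filter Topology

variable {m : ℕ} {A : Matrix (Fin m) (Fin m) ℝ}

/-- The cone of real matrices whose quadratic form is negative away from the origin.  Symmetry is
not required, so that the cone is open in the space of all matrices. -/
def negDefCone (m : ℕ) : ConvexCone ℝ (Matrix (Fin m) (Fin m) ℝ) where
  carrier := {A | ∀ u : Fin m → ℝ, u ≠ 0 → u ⬝ᵥ (A *ᵥ u) < 0}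
  smul_mem' t ht A hA u hu := by
    rw [smul_mulVec, dotProduct_smul, smul_eq_mul]
    exact mul_neg_of_pos_of_neg ht (hA u hu)
  add_mem' A hA B hB u hu := by
    rw [add_mulVec, dotProduct_add]
    exact add_neg (hA u hu) (hB u hu)

lemma mem_negDefCone : A ∈ negDefCone m ↔ ∀ u : Fin m → ℝ, u ≠ 0 → u ⬝ᵥ (A *ᵥ u) < 0 := Iff.rfl

lemma mem_negDefCone_iff_vecNorm :
    A ∈ negDefCone m ↔ ∀ u : Fin m → ℝ, vecNorm u = 1 → u ⬝ᵥ (A *ᵥ u) < 0 := by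
  refine ⟨fun h u hu => h u (ne_zero_of_vecNorm_eq_one hu), fun h u hu => ?_⟩
  obtain ⟨v, hv, huv⟩ := exists_eq_vecNorm_smul hu
  rw [huv, dotProduct_smul_mulVec_smul]
  exact mul_neg_of_pos_of_neg (pow_pos (vecNorm_pos hu) 2) (h v hv)

lemma mem_negDefCone_of_lambdaMin_neg_pos (hA : 0 < lambdaMin (-A)) : A ∈ negDefCone m :=
  mem_negDefCone_iff_vecNorm.2 fun u hu => by
    have := hA.trans_le (lambdaMin_le hu)
    rwa [neg_mulVec, dotProduct_neg, neg_pos] at this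

lemma isOpen_negDefCone : IsOpen (negDefCone m : Set (Matrix (Fin m) (Fin m) ℝ)) := by
  rw [isOpen_iff_mem_nhds]
  intro A hA
  have h_unit : ∀ᶠ B in 𝓝 A, ∀ u ∈ {u : Fin m → ℝ | vecNorm u = 1}, u ⬝ᵥ (B *ᵥ u) < 0 := by
    refine isCompact_vecNorm_eq_one.eventually_forall_of_forall_eventually fun u hu => ?_
    have h_cont : Continuous fun z : Matrix (Fin m) (Fin m) ℝ × (Fin m → ℝ) =>
        z.2 ⬝ᵥ (z.1 *ᵥ z.2) := by fun_prop
    exact h_cont.continuousAt.eventually_lt_const (mem_negDefCone_iff_vecNorm.1 hA u hu)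
  filter_upwards [h_unit] with B hB using mem_negDefCone_iff_vecNorm.2 hB

lemma mem_closure_negDefCone :
    A ∈ closure (negDefCone m : Set (Matrix (Fin m) (Fin m) ℝ)) ↔
      ∀ u, u ⬝ᵥ (A *ᵥ u) ≤ 0 := by
  refine ⟨fun hA u => ?_, fun hA => ?_⟩
  · refine closure_minimal (fun B hB => ?_)
      (isClosed_le (f := fun B => u ⬝ᵥ (B *ᵥ u)) (by fun_prop) continuous_const) hA
    rcases eq_or_ne u 0 with rfl | hu
    · simp
    · exact (hB u hu).le
  · have h_lim : Tendsto (fun t : ℝ => A - t • (1 : Matrix (Fin m) (Fin m) ℝ))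
        (𝓝[>] 0) (𝓝 A) := by
      have : Continuous fun t : ℝ => A - t • (1 : Matrix (Fin m) (Fin m) ℝ) := by fun_prop
      simpa using (this.tendsto 0).mono_left nhdsWithin_le_nhds
    refine mem_closure_of_tendsto h_lim (eventually_nhdsWithin_of_forall fun t ht u hu => ?_)
    rw [sub_mulVec, smul_mulVec, one_mulVec, dotProduct_sub, dotProduct_smul, smul_eq_mul,
      ← vecNorm_sq]
    have := mul_pos (Set.mem_Ioi.1 ht) (pow_pos (vecNorm_pos hu) 2)
    linarith [hA u]

lemma negDef'_iff_mem_negDefCone (hA : A.IsSymm) : NegDef' A ↔ A ∈ negDefCone m := by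
  rw [NegDef', posDef_iff_dotProduct_mulVec, mem_negDefCone]
  simp only [isHermitian_iff_isSymm, hA.neg, star_trivial, neg_mulVec, dotProduct_neg, neg_pos,
    true_and]

lemma negSemidef'_iff_mem_closure (hA : A.IsSymm) :
    NegSemidef' A ↔ A ∈ closure (negDefCone m : Set (Matrix (Fin m) (Fin m) ℝ)) := by
  rw [mem_closure_negDefCone, NegSemidef', posSemidef_iff_dotProduct_mulVec]
  simp only [isHermitian_iff_isSymm, hA.neg, star_trivial, neg_mulVec, dotProduct_neg,
    neg_nonneg, true_and]

lemma add_mem_negDefCone_of_mem_closure {B : Matrix (Fin m) (Fin m) ℝ}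
    (hA : A ∈ closure (negDefCone m : Set (Matrix (Fin m) (Fin m) ℝ))) (hB : B ∈ negDefCone m) :
    A + B ∈ negDefCone m := fun u hu => by
  rw [add_mulVec, dotProduct_add]
  exact add_neg_of_nonpos_of_neg (mem_closure_negDefCone.1 hA u) (hB u hu)

lemma exists_posSemidef_trace_mul_eq {ψ : Matrix (Fin m) (Fin m) ℝ →L[ℝ] ℝ}
    (hψ : ∀ Z ∈ negDefCone m, ψ Z ≤ 0) :
    ∃ Λ : Matrix (Fin m) (Fin m) ℝ, Λ.IsSymm ∧ Λ.PosSemidef ∧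
      ∀ Z, Z.IsSymm → ψ Z = (Λ * Z).trace := by
  obtain ⟨W, hW⟩ := exists_eq_trace_mul ψ.toLinearMap
  have hW_symm {Z : Matrix (Fin m) (Fin m) ℝ} (hZ : Z.IsSymm) : (Wᵀ * Z).trace = ψ Z := by
    rw [← trace_transpose, transpose_mul, transpose_transpose, hZ.eq, trace_mul_comm]
    exact (hW Z).symm
  have h_eq (Z : Matrix (Fin m) (Fin m) ℝ) (hZ : Z.IsSymm) :
      ψ Z = (((2 : ℝ)⁻¹ • (W + Wᵀ)) * Z).trace := by
    rw [Matrix.smul_mul, trace_smul, Matrix.add_mul, trace_add, hW_symm hZ, ← hW Z, smul_eq_mul]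
    rw [ContinuousLinearMap.coe_coe]
    ring
  have h_symm : ((2 : ℝ)⁻¹ • (W + Wᵀ)).IsSymm := (isSymm_add_transpose_self W).smul _
  refine ⟨_, h_symm, posSemidef_of_isSymm h_symm fun u => ?_, h_eq⟩
  have h_mem : -vecMulVec u u ∈ closure (negDefCone m : Set (Matrix (Fin m) (Fin m) ℝ)) :=
    mem_closure_negDefCone.2 fun v => by
      rw [neg_mulVec, vecMulVec_mulVec, dotProduct_neg, op_smul_eq_smul, dotProduct_smul,
        smul_eq_mul, dotProduct_comm v u]
      exact neg_nonpos.2 (mul_self_nonneg _)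
  have h_nonpos : ψ (-vecMulVec u u) ≤ 0 :=
    closure_minimal hψ (isClosed_le ψ.continuous continuous_const) h_mem
  have h_symm_rankOne : (vecMulVec u u).IsSymm := by rw [IsSymm, transpose_vecMulVec]
  rw [map_neg, neg_nonpos, h_eq _ h_symm_rankOne, mul_vecMulVec, trace_vecMulVec,
    dotProduct_comm] at h_nonpos
  exact h_nonpos

end NegDefCone

section SpecNorm

open scoped Matrix.Norms.L2Operator

variable {k : ℕ}

lemma specNorm_eq_l2_opNorm (A : Matrix (Fin k) (Fin k) ℝ) : specNorm A = ‖A‖ := by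
  rw [l2_opNorm_def, ← ContinuousLinearMap.sSup_sphere_eq_norm, specNorm]
  congr 1
  ext r
  simp only [Set.mem_ofPred_eq, Set.mem_image, mem_sphere_zero_iff_norm, vecNorm_eq_norm_toLp]
  exact ⟨fun ⟨v, hv, hr⟩ => ⟨WithLp.toLp 2 v, hv, hr.symm⟩,
    fun ⟨v, hv, hr⟩ => ⟨v.ofLp, hv, hr.symm⟩⟩

lemma vecNorm_mulVec_le (A : Matrix (Fin k) (Fin k) ℝ) (v : Fin k → ℝ) :
    vecNorm (A *ᵥ v) ≤ specNorm A * vecNorm v := by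
  rw [specNorm_eq_l2_opNorm, vecNorm_eq_norm_toLp, vecNorm_eq_norm_toLp]
  exact l2_opNorm_mulVec A (WithLp.toLp 2 v)

lemma specNorm_nonneg (A : Matrix (Fin k) (Fin k) ℝ) : 0 ≤ specNorm A := by
  rw [specNorm_eq_l2_opNorm]
  exact norm_nonneg A

lemma continuous_specNorm : Continuous (specNorm : Matrix (Fin k) (Fin k) ℝ → ℝ) := by
  simpa only [← specNorm_eq_l2_opNorm] using
    (continuous_norm : Continuous fun A : Matrix (Fin k) (Fin k) ℝ => ‖A‖)

end SpecNorm

section Pencil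

variable {n m : ℕ} {F0 : Matrix (Fin m) (Fin m) ℝ} {K : Fin n → Matrix (Fin m) (Fin m) ℝ}
  {L : Fin n → Fin n → Matrix (Fin m) (Fin m) ℝ}

/-- The matrix-valued bilinear form `(x, y) ↦ ∑ᵢⱼ xᵢ yⱼ Lᵢⱼ`, whose diagonal is the quadratic part
of the pencil. -/
def pencilBilin (L : Fin n → Fin n → Matrix (Fin m) (Fin m) ℝ) :
    (Fin n → ℝ) →ₗ[ℝ] (Fin n → ℝ) →ₗ[ℝ] Matrix (Fin m) (Fin m) ℝ :=
  Matrix.toLinearMap₂' ℝ (Matrix.of L)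

/-- The matrix `M(u)` of the pencil norm, with entries `uᵀ Lᵢⱼ u`. -/
def pencilForm (L : Fin n → Fin n → Matrix (Fin m) (Fin m) ℝ) (u : Fin m → ℝ) :
    Matrix (Fin n) (Fin n) ℝ :=
  Matrix.of fun i j => u ⬝ᵥ (L i j *ᵥ u)

/-- The derivative `h ↦ ∑ₖ hₖ (Kₖ + δₖ(x))` at `x` of the map `x ↦ p(x, xxᵀ)`. -/
def pencilDeriv (K : Fin n → Matrix (Fin m) (Fin m) ℝ)
    (L : Fin n → Fin n → Matrix (Fin m) (Fin m) ℝ) (x : Fin n → ℝ) :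
    (Fin n → ℝ) →ₗ[ℝ] Matrix (Fin m) (Fin m) ℝ :=
  Fintype.linearCombination ℝ fun k => K k + deltaMat L k x

lemma pencilBilin_apply (x y : Fin n → ℝ) :
    pencilBilin L x y = ∑ i, ∑ j, x i • y j • L i j := by
  simp only [pencilBilin, Matrix.toLinearMap₂'_apply, of_apply]

lemma pencilDeriv_apply (x h : Fin n → ℝ) :
    pencilDeriv K L x h = ∑ k, h k • (K k + deltaMat L k x) := rfl

lemma pencilDeriv_apply_eq_pencilBilin (x h : Fin n → ℝ) :
    pencilDeriv K L x h = ∑ k, h k • K k + (2 : ℝ) • pencilBilin L h x := by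
  simp only [pencilDeriv_apply, deltaMat, pencilBilin_apply, smul_add, Finset.sum_add_distrib,
    Finset.smul_sum, smul_comm (2 : ℝ)]

lemma pencil_vecMulVec_self (x : Fin n → ℝ) :
    pencil F0 K L x (vecMulVec x x) = F0 + ∑ k, x k • K k + pencilBilin L x x := by
  simp only [pencil, pencilBilin_apply, vecMulVec_apply, mul_smul]

lemma pencilBilin_comm (hL : ∀ i j, L i j = L j i) (x y : Fin n → ℝ) :
    pencilBilin L x y = pencilBilin L y x := by
  rw [pencilBilin_apply, pencilBilin_apply, Finset.sum_comm]
  exact Finset.sum_congr rfl fun i _ => Finset.sum_congr rfl fun j _ => by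
    rw [smul_comm, hL]

lemma pencil_add_smul (hL : ∀ i j, L i j = L j i) (x h : Fin n → ℝ) (t : ℝ) :
    pencil F0 K L (x + t • h) (vecMulVec (x + t • h) (x + t • h)) =
      pencil F0 K L x (vecMulVec x x) + t • pencilDeriv K L x h + t ^ 2 • pencilBilin L h h := by
  simp only [pencil_vecMulVec_self, pencilDeriv_apply_eq_pencilBilin, map_add, map_smul,
    LinearMap.add_apply, LinearMap.smul_apply, pencilBilin_comm hL x h, Pi.add_apply,
    Pi.smul_apply, smul_eq_mul, add_smul, mul_smul, Finset.sum_add_distrib, ← Finset.smul_sum]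
  module

lemma isSymm_pencilBilin (hL : ∀ i j, (L i j).IsSymm) (x y : Fin n → ℝ) :
    (pencilBilin L x y).IsSymm := by
  rw [pencilBilin_apply]
  exact isSymm_sum fun i => isSymm_sum fun j => ((hL i j).smul _).smul _

lemma isSymm_pencil (hF0 : F0.IsSymm) (hK : ∀ k, (K k).IsSymm) (hL : ∀ i j, (L i j).IsSymm)
    (x : Fin n → ℝ) : (pencil F0 K L x (vecMulVec x x)).IsSymm := by
  rw [pencil_vecMulVec_self]
  exact (hF0.add (isSymm_sum fun k => (hK k).smul _)).add (isSymm_pencilBilin hL x x)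

lemma isSymm_pencilDeriv (hK : ∀ k, (K k).IsSymm) (hL : ∀ i j, (L i j).IsSymm)
    (x h : Fin n → ℝ) : (pencilDeriv K L x h).IsSymm := by
  rw [pencilDeriv_apply_eq_pencilBilin]
  exact (isSymm_sum fun k => (hK k).smul _).add ((isSymm_pencilBilin hL h x).smul _)

lemma dotProduct_pencilBilin_mulVec (x y : Fin n → ℝ) (u : Fin m → ℝ) :
    u ⬝ᵥ (pencilBilin L x y *ᵥ u) = x ⬝ᵥ (pencilForm L u *ᵥ y) := by
  simp only [pencilBilin_apply, sum_mulVec, smul_mulVec, dotProduct_sum, dotProduct_smul,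
    smul_eq_mul]
  change _ = ∑ i, x i * ∑ j, (u ⬝ᵥ (L i j *ᵥ u)) * y j
  simp only [Finset.mul_sum, mul_comm (y _)]

lemma specNorm_pencilForm_le_pencilNorm {u : Fin m → ℝ} (hu : vecNorm u = 1) :
    specNorm (pencilForm L u) ≤ pencilNorm L := by
  refine le_csSup ?_ ⟨u, hu, rfl⟩
  have h_cont : Continuous fun u => specNorm (pencilForm L u) :=
    continuous_specNorm.comp <| continuous_matrix fun i j => by
      simp only [pencilForm, of_apply]
      fun_prop
  convert isCompact_vecNorm_eq_one.bddAbove_image h_cont.continuousOn using 1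
  ext r
  simp only [pencilForm, Set.mem_ofPred_eq, Set.mem_image, eq_comm]

lemma pencilNorm_nonneg : 0 ≤ pencilNorm L :=
  Real.sSup_nonneg <| by
    rintro _ ⟨u, -, rfl⟩
    exact specNorm_nonneg _

lemma dotProduct_pencilBilin_mulVec_le {x : Fin n → ℝ} (hx : vecNorm x = 1) (y : Fin n → ℝ)
    {u : Fin m → ℝ} (hu : vecNorm u = 1) :
    u ⬝ᵥ (pencilBilin L x y *ᵥ u) ≤ pencilNorm L * vecNorm y :=
  calc u ⬝ᵥ (pencilBilin L x y *ᵥ u)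
    _ = x ⬝ᵥ (pencilForm L u *ᵥ y) := dotProduct_pencilBilin_mulVec x y u
    _ ≤ vecNorm x * vecNorm (pencilForm L u *ᵥ y) := dotProduct_le_vecNorm_mul_vecNorm _ _
    _ = vecNorm (pencilForm L u *ᵥ y) := by rw [hx, one_mul]
    _ ≤ specNorm (pencilForm L u) * vecNorm y := vecNorm_mulVec_le _ _
    _ ≤ pencilNorm L * vecNorm y :=
      mul_le_mul_of_nonneg_right (specNorm_pencilForm_le_pencilNorm hu) (vecNorm_nonneg y)

lemma lambdaMin_neg_pencilDeriv_sub_le [NeZero m] {b : Fin n → ℝ} (hb : vecNorm b = 1)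
    (x y : Fin n → ℝ) :
    lambdaMin (-pencilDeriv K L y b) - 2 * pencilNorm L * vecNorm (x - y) ≤
      lambdaMin (-pencilDeriv K L x b) := by
  refine le_lambdaMin fun u hu => ?_
  have h_split : -pencilDeriv K L x b =
      -pencilDeriv K L y b - (2 : ℝ) • pencilBilin L b (x - y) := by
    rw [pencilDeriv_apply_eq_pencilBilin, pencilDeriv_apply_eq_pencilBilin, map_sub]
    module
  rw [h_split, sub_mulVec, smul_mulVec, dotProduct_sub, dotProduct_smul, smul_eq_mul]
  linarith [lambdaMin_le (A := -pencilDeriv K L y b) hu,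
    dotProduct_pencilBilin_mulVec_le (L := L) hb (x - y) hu]

lemma continuous_pencilDeriv (x : Fin n → ℝ) : Continuous (pencilDeriv K L x) := by
  simp only [funext (pencilDeriv_apply (K := K) (L := L) x)]
  fun_prop

lemma lambdaMin_le_sFun [NeZero m] {b : Fin n → ℝ} (hb : vecNorm b = 1) (x : Fin n → ℝ) :
    lambdaMin (-pencilDeriv K L x b) ≤ sFun K L x := by
  obtain ⟨u, hu⟩ := exists_vecNorm_eq_one (k := m)
  obtain ⟨C, hC⟩ := isCompact_vecNorm_eq_one.bddAbove_image
    (f := fun b => u ⬝ᵥ (-pencilDeriv K L x b *ᵥ u)) <| by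
      have := continuous_pencilDeriv (K := K) (L := L) x
      fun_prop
  refine le_csSup ⟨C, ?_⟩ ⟨b, hb, rfl⟩
  rintro _ ⟨b', hb', rfl⟩
  exact (lambdaMin_le hu).trans (hC ⟨b', hb', rfl⟩)

lemma sFun_sub_le [NeZero n] [NeZero m] (x y : Fin n → ℝ) :
    sFun K L y - 2 * pencilNorm L * vecNorm (x - y) ≤ sFun K L x := by
  obtain ⟨b₀, hb₀⟩ := exists_vecNorm_eq_one (k := n)
  rw [sub_le_iff_le_add]
  refine csSup_le ⟨_, b₀, hb₀, rfl⟩ ?_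
  rintro _ ⟨b, hb, rfl⟩
  exact sub_le_iff_le_add.1
    ((lambdaMin_neg_pencilDeriv_sub_le hb x y).trans (lambdaMin_le_sFun hb x))

lemma exists_lambdaMin_pos_of_sFun_pos {x : Fin n → ℝ} (hs : 0 < sFun K L x) :
    ∃ b, 0 < lambdaMin (-pencilDeriv K L x b) := by
  contrapose! hs
  refine Real.sSup_nonpos ?_
  rintro _ ⟨b, -, rfl⟩
  exact hs b

end Pencil

section KKT

variable {n m : ℕ} {F0 : Matrix (Fin m) (Fin m) ℝ} {K : Fin n → Matrix (Fin m) (Fin m) ℝ}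
  {L : Fin n → Fin n → Matrix (Fin m) (Fin m) ℝ} {c xc x : Fin n → ℝ} {η : ℝ}

lemma mem_feasSet_iff (hF0 : F0.IsSymm) (hK : ∀ k, (K k).IsSymm) (hL : ∀ i j, (L i j).IsSymm) :
    x ∈ feasSet F0 K L ↔ pencil F0 K L x (vecMulVec x x) ∈
      closure (negDefCone m : Set (Matrix (Fin m) (Fin m) ℝ)) :=
  negSemidef'_iff_mem_closure (isSymm_pencil hF0 hK hL x)

lemma mfcq_iff (hF0 : F0.IsSymm) (hK : ∀ k, (K k).IsSymm) (hL : ∀ i j, (L i j).IsSymm) :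
    MFCQ F0 K L x ↔
      ∃ b, pencil F0 K L x (vecMulVec x x) + pencilDeriv K L x b ∈ negDefCone m :=
  exists_congr fun b => negDef'_iff_mem_negDefCone
    ((isSymm_pencil hF0 hK hL x).add (isSymm_pencilDeriv hK hL x b))

lemma mfcq_of_sFun_pos (hF0 : F0.IsSymm) (hK : ∀ k, (K k).IsSymm) (hL : ∀ i j, (L i j).IsSymm)
    (hx : x ∈ feasSet F0 K L) (hs : 0 < sFun K L x) : MFCQ F0 K L x := by
  obtain ⟨b, hb⟩ := exists_lambdaMin_pos_of_sFun_pos hs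
  exact (mfcq_iff hF0 hK hL).2 ⟨b, add_mem_negDefCone_of_mem_closure
    ((mem_feasSet_iff hF0 hK hL).1 hx) (mem_negDefCone_of_lambdaMin_neg_pos hb)⟩

lemma penObj_add_smul (h : Fin n → ℝ) (t : ℝ) :
    penObj c xc η (x + t • h) =
      penObj c xc η x + t • ((c + (2 * η) • (x - xc)) ⬝ᵥ h) + t ^ 2 • (η * (h ⬝ᵥ h)) := by
  have h_shift : x + t • h - xc = (x - xc) + t • h := by abel
  simp only [penObj, vecNorm_sq, h_shift, dotProduct_add, add_dotProduct, dotProduct_smul,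
    smul_dotProduct, smul_eq_mul, dotProduct_comm h (x - xc)]
  ring

lemma hasLineDerivAt_penObj (h : Fin n → ℝ) :
    HasLineDerivAt ℝ (penObj c xc η) ((c + (2 * η) • (x - xc)) ⬝ᵥ h) x h := by
  simpa only [HasLineDerivAt, penObj_add_smul] using hasDerivAt_quadratic _ _ _

lemma trace_mul_pencilDeriv (Λ : Matrix (Fin m) (Fin m) ℝ) (h : Fin n → ℝ) :
    (Λ * pencilDeriv K L x h).trace =
      ((∑ k, (K k * Λ).trace • (Pi.single k 1 : Fin n → ℝ)) +
        (2 : ℝ) • (alphaMat L Λ *ᵥ x)) ⬝ᵥ h := by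
  have h_single : ∑ k, (K k * Λ).trace • (Pi.single k 1 : Fin n → ℝ) =
      fun k => (K k * Λ).trace := by
    ext k
    simp [Finset.sum_apply, Pi.single_apply]
  have h_delta (k : Fin n) : (deltaMat L k x * Λ).trace = 2 * (alphaMat L Λ *ᵥ x) k := by
    simp only [deltaMat, alphaMat, mulVec, dotProduct, of_apply, Matrix.smul_mul, Matrix.sum_mul,
      trace_smul, trace_sum, smul_eq_mul, mul_comm (x _)]
  simp only [h_single, trace_mul_comm Λ, pencilDeriv_apply, Matrix.sum_mul, Matrix.smul_mul,
    Matrix.add_mul, trace_sum, trace_smul, trace_add, h_delta, dotProduct, Pi.add_apply,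
    Pi.smul_apply, smul_eq_mul, mul_comm (h _)]

open scoped Matrix.Norms.L2Operator in
lemma hasLineDerivAt_pencil (hLsy : ∀ i j, L i j = L j i) (h : Fin n → ℝ) :
    HasLineDerivAt ℝ (fun y => pencil F0 K L y (vecMulVec y y)) (pencilDeriv K L x h) x h := by
  simpa only [HasLineDerivAt, pencil_add_smul hLsy] using hasDerivAt_quadratic _ _ _

open scoped Matrix.Norms.L2Operator in
lemma IsOptPen.exists_kkt (hF0 : F0.IsSymm) (hK : ∀ k, (K k).IsSymm)
    (hL : ∀ i j, (L i j).IsSymm) (hLsy : ∀ i j, L i j = L j i)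
    (hx : IsOptPen F0 K L c xc η x) (h_mfcq : MFCQ F0 K L x) : ∃ Λ, KKT F0 K L c xc η x Λ := by
  set P : (Fin n → ℝ) → Matrix (Fin m) (Fin m) ℝ := fun y => pencil F0 K L y (vecMulVec y y)
  set grad := c + (2 * η) • (x - xc)
  have h_min : IsMinOn (penObj c xc η)
      {y | P y ∈ closure (negDefCone m : Set (Matrix (Fin m) (Fin m) ℝ))} x :=
    fun y hy => hx.2 y ((mem_feasSet_iff hF0 hK hL).2 hy)
  obtain ⟨ψ, hψ, h_stat, h_compl⟩ := exists_multiplier_of_isMinOn (P := P) isOpen_negDefCone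
    ((mem_feasSet_iff hF0 hK hL).1 hx.1) h_min (dotProductBilin ℝ ℝ grad) hasLineDerivAt_penObj
    (pencilDeriv K L x) (hasLineDerivAt_pencil hLsy) ((mfcq_iff hF0 hK hL).1 h_mfcq)
  obtain ⟨Λ, hΛ_symm, hΛ, hψΛ⟩ := exists_posSemidef_trace_mul_eq hψ
  refine ⟨Λ, hΛ_symm, hΛ, ?_, ?_⟩
  · refine dotProduct_eq_zero _ fun h => ?_
    rw [add_assoc, add_dotProduct, ← trace_mul_pencilDeriv,
      ← hψΛ _ (isSymm_pencilDeriv hK hL x h)]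
    exact h_stat h
  · rw [← neg_eq_zero, ← Matrix.mul_neg]
    refine mul_eq_zero_of_trace_mul_eq_zero hΛ hx.1 ?_
    rw [Matrix.mul_neg, trace_neg, ← hψΛ _ (isSymm_pencil hF0 hK hL x), neg_eq_zero]
    exact h_compl

lemma KKT.sFun_mul_trace_le (hK : ∀ k, (K k).IsSymm) (hL : ∀ i j, (L i j).IsSymm)
    {Λ : Matrix (Fin m) (Fin m) ℝ} (h : KKT F0 K L c xc η x Λ) :
    sFun K L x * Λ.trace ≤ vecNorm (c + (2 * η) • (x - xc)) := by
  obtain ⟨-, hΛ, h_stat, -⟩ := h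
  have h_dir {b : Fin n → ℝ} (hb : vecNorm b = 1) :
      lambdaMin (-pencilDeriv K L x b) * Λ.trace ≤ vecNorm (c + (2 * η) • (x - xc)) := by
    have h_psd := posSemidef_sub_lambdaMin_smul_one (isSymm_pencilDeriv hK hL x b).neg
    have h_nonneg := trace_mul_nonneg_of_posSemidef hΛ h_psd
    rw [Matrix.mul_sub, trace_sub, Matrix.mul_smul, trace_smul, Matrix.mul_one, smul_eq_mul,
      Matrix.mul_neg, trace_neg, trace_mul_pencilDeriv] at h_nonneg
    have h_pair := congr($h_stat ⬝ᵥ b)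
    rw [add_assoc, add_dotProduct, zero_dotProduct] at h_pair
    have h_cs := dotProduct_le_vecNorm_mul_vecNorm (c + (2 * η) • (x - xc)) b
    rw [hb, mul_one] at h_cs
    linarith
  rcases hΛ.trace_nonneg.eq_or_lt with h0 | h0
  · rw [← h0, mul_zero]
    exact vecNorm_nonneg _
  · rw [← le_div_iff₀ h0]
    refine Real.sSup_le ?_ (div_nonneg (vecNorm_nonneg _) h0.le)
    rintro _ ⟨b, hb, rfl⟩
    exact (le_div_iff₀ h0).2 (h_dir hb)

end KKT

section Penalty

open Filter Topology

variable {n m : ℕ} {F0 : Matrix (Fin m) (Fin m) ℝ} {K : Fin n → Matrix (Fin m) (Fin m) ℝ}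
  {L : Fin n → Fin n → Matrix (Fin m) (Fin m) ℝ} {c xc x : Fin n → ℝ} {η : ℝ}

lemma IsOptPen.vecNorm_sub_le_of_mem (hη : 0 < η) (hx : IsOptPen F0 K L c xc η x)
    {a : Fin n → ℝ} (ha : a ∈ feasSet F0 K L) :
    vecNorm (x - xc) ≤ vecNorm (a - xc) + vecNorm c / η := by
  have h_opt : η * (vecNorm (x - xc) ^ 2 - vecNorm (a - xc) ^ 2) ≤ c ⬝ᵥ (a - x) := by
    have := hx.2 a ha
    rw [penObj, penObj] at this
    rw [dotProduct_sub]
    linarith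
  have h_lin : c ⬝ᵥ (a - x) ≤ vecNorm c * (vecNorm (x - xc) + vecNorm (a - xc)) :=
    (dotProduct_le_vecNorm_mul_vecNorm _ _).trans <| mul_le_mul_of_nonneg_left
      (by linarith [vecNorm_sub_le a xc x, vecNorm_sub_comm xc x]) (vecNorm_nonneg c)
  by_contra! h_lt
  have h_excess : vecNorm c < η * (vecNorm (x - xc) - vecNorm (a - xc)) := by
    rw [← div_lt_iff₀' hη]
    linarith
  have h_sum_pos : 0 < vecNorm (x - xc) + vecNorm (a - xc) := by
    linarith [vecNorm_nonneg (a - xc), div_nonneg (vecNorm_nonneg c) hη.le]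
  have := mul_lt_mul_of_pos_right h_excess h_sum_pos
  linarith

lemma IsOptPen.vecNorm_sub_le (hη : 0 < η) (hx : IsOptPen F0 K L c xc η x) :
    vecNorm (x - xc) ≤ distF F0 K L xc + vecNorm c / η := by
  rw [← sub_le_iff_le_add]
  refine le_csInf ⟨_, x, hx.1, rfl⟩ ?_
  rintro _ ⟨a, ha, rfl⟩
  rw [sub_le_iff_le_add, vecNorm_sub_comm xc a]
  exact hx.vecNorm_sub_le_of_mem hη ha

lemma IsOptPen.exists_kkt_trace_div_le [NeZero n] [NeZero m] (hF0 : F0.IsSymm)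
    (hK : ∀ k, (K k).IsSymm) (hL : ∀ i j, (L i j).IsSymm) (hLsy : ∀ i j, L i j = L j i)
    (hη : 0 < η) (hx : IsOptPen F0 K L c xc η x)
    (h_gap : 0 < sFun K L xc - 2 * pencilNorm L * (distF F0 K L xc + vecNorm c / η)) :
    ∃ Λ, KKT F0 K L c xc η x Λ ∧ Λ.trace / η ≤
      (2 * distF F0 K L xc + 3 * (vecNorm c / η)) /
        (sFun K L xc - 2 * pencilNorm L * (distF F0 K L xc + vecNorm c / η)) := by
  set d := distF F0 K L xc
  set q := vecNorm c / η
  have h_dist : vecNorm (x - xc) ≤ d + q := hx.vecNorm_sub_le hη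
  have h_s : sFun K L xc - 2 * pencilNorm L * (d + q) ≤ sFun K L x :=
    (sub_le_sub_left (mul_le_mul_of_nonneg_left h_dist (mul_nonneg two_pos.le pencilNorm_nonneg))
      _).trans (sFun_sub_le x xc)
  obtain ⟨Λ, hΛ⟩ :=
    hx.exists_kkt hF0 hK hL hLsy (mfcq_of_sFun_pos hF0 hK hL hx.1 (h_gap.trans_le h_s))
  refine ⟨Λ, hΛ, ?_⟩
  rw [div_le_div_iff₀ hη h_gap]
  calc Λ.trace * (sFun K L xc - 2 * pencilNorm L * (d + q))
    _ ≤ Λ.trace * sFun K L x := mul_le_mul_of_nonneg_left h_s hΛ.2.1.trace_nonneg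
    _ = sFun K L x * Λ.trace := mul_comm _ _
    _ ≤ vecNorm (c + (2 * η) • (x - xc)) := hΛ.sFun_mul_trace_le hK hL
    _ ≤ vecNorm c + vecNorm ((2 * η) • (x - xc)) := vecNorm_add_le _ _
    _ = q * η + 2 * η * vecNorm (x - xc) := by
      rw [vecNorm_smul, abs_of_pos (mul_pos two_pos hη), div_mul_cancel₀ _ hη.ne']
    _ ≤ q * η + 2 * η * (d + q) := by gcongr
    _ = (2 * d + 3 * q) * η := by ring

lemma eventually_gap_pos_and_bound_lt {s P d ε : ℝ} (h_gap : 2 * P * d < s) (hε : 0 < ε) (C : ℝ) :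
    ∀ᶠ η in atTop, 0 < s - 2 * P * (d + C / η) ∧
      (2 * d + 3 * (C / η)) / (s - 2 * P * (d + C / η)) < 2 * d / (s - 2 * P * d) + ε := by
  have h_gap_pos : 0 < s - 2 * P * d := sub_pos.2 h_gap
  have h_q : Tendsto (fun η => C / η) atTop (𝓝 0) := tendsto_const_nhds.div_atTop tendsto_id
  have h_den : Tendsto (fun η => s - 2 * P * (d + C / η)) atTop (𝓝 (s - 2 * P * d)) := by
    simpa using ((h_q.const_add d).const_mul (2 * P)).const_sub s
  have h_num : Tendsto (fun η => 2 * d + 3 * (C / η)) atTop (𝓝 (2 * d)) := by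
    simpa using (h_q.const_mul 3).const_add (2 * d)
  exact (h_den.eventually_const_lt h_gap_pos).and
    ((h_num.div h_den h_gap_pos.ne').eventually_lt_const (lt_add_of_pos_right _ hε))

end Penalty

theorem bmi_lemma_six {n m : ℕ} (hn : 0 < n) (hm : 0 < m)
    (F0 : Matrix (Fin m) (Fin m) ℝ)
    (K : Fin n → Matrix (Fin m) (Fin m) ℝ)
    (L : Fin n → Fin n → Matrix (Fin m) (Fin m) ℝ)
    (hF0 : F0.IsSymm) (hK : ∀ k, (K k).IsSymm)
    (hL : ∀ i j, (L i j).IsSymm) (hLsy : ∀ i j, L i j = L j i)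
    (c xc : Fin n → ℝ)
    (hne : (feasSet F0 K L).Nonempty)
    (hgap : 2 * pencilNorm L * distF F0 K L xc < sFun K L xc)
    (ε : ℝ) (hε : 0 < ε) :
    ∃ η₀ > (0 : ℝ), ∀ η ≥ η₀,
      ∀ xs : Fin n → ℝ, IsOptPen F0 K L c xc η xs →
        ∃ Λ : Matrix (Fin m) (Fin m) ℝ,
          KKT F0 K L c xc η xs Λ ∧
          Λ.trace / η ≤
            2 * distF F0 K L xc / (sFun K L xc - 2 * pencilNorm L * distF F0 K L xc)
              + ε := by
  have : NeZero n := ⟨hn.ne'⟩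
  have : NeZero m := ⟨hm.ne'⟩
  obtain ⟨η₀, hη₀⟩ := Filter.eventually_atTop.1 ((Filter.eventually_gt_atTop 0).and
    (eventually_gap_pos_and_bound_lt hgap hε (vecNorm c)))
  refine ⟨η₀, (hη₀ η₀ le_rfl).1, fun η hη x hx => ?_⟩
  obtain ⟨hη_pos, h_gap, h_lt⟩ := hη₀ η hη
  obtain ⟨Λ, hΛ, h_le⟩ := hx.exists_kkt_trace_div_le hF0 hK hL hLsy hη_pos h_gap
  exact ⟨Λ, hΛ, h_le.trans h_lt.le⟩
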